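/- arXiv:2005.00772 — 2 statements merged into one kernel-verified Lean document; each statement's English description precedes it below -/
import Mathlib

section
/- For all natural numbers n and λ, ∑_{k=0}^{n} (−1)^k · binom(n,k) · (1−n) · binom(2λ, λ)² / (binom(2k+2λ, k+λ) · binom(2n−2k+2λ, n−k+λ)) equals χ(n even) · binom(2λ, λ)² · binom(n, ⌊n/2⌋) / (binom(λ+n, n) · binom(2λ+2n, λ+n) · binom(2λ+n, λ+⌊n/2⌋)), as an equality of rational numbers. -/
/-!
With `r k = 4 ^ k / centralBinom (l + k)` the sum is, up to constants, the alternating binomial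
convolution of `r` with itself, and `r` is hypergeometric: `(d + k) r (k + 1) = (b + k) r k` for
`b = l + 1`, `d = l + 1/2`. Such convolutions are evaluated by Dixon's summation of a terminating
well-poised `₃F₂`.

To prove Dixon's formula, multiply the summand of index `i + j = n + 2` by
`i (d + i - 1) (b + j) + j (b + i) (d + j - 1)`. After absorbing `i` and `j` into the binomial
coefficient both halves become the convolution of `(b + k) r k` with itself, with opposite signs,
so the weighted sum vanishes. The weight equals `b (n + 2) (d + n + 1) + i j (2 (d - b) + n)`, and
absorbing `i j` turns this into a recurrence from `n + 2` to `n` with `r` replaced by its shift. The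
Pochhammer symbol of `d - b = -1/2` in the resulting closed form produces the factor `1 - n`.
-/

open Finset Polynomial
open scoped Nat

section AlternatingBinomSum

variable {R : Type*} [CommRing R]

/-- The alternating binomial sum `∑_{i + j = n} (-1)^i (n choose i) f(i, j)`. Having both indices as
arguments of `f` avoids the truncated subtraction `n - i`. -/
def alternatingBinomSum (n : ℕ) (f : ℕ → ℕ → R) : R :=
  ∑ p ∈ antidiagonal n, (-1) ^ p.1 * (n.choose p.1 : R) * f p.1 p.2

theorem alternatingBinomSum_congr {n : ℕ} {f g : ℕ → ℕ → R}
    (h : ∀ i j, i + j = n → f i j = g i j) :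
    alternatingBinomSum n f = alternatingBinomSum n g :=
  sum_congr rfl fun p hp => by rw [h p.1 p.2 (mem_antidiagonal.mp hp)]

theorem alternatingBinomSum_add (n : ℕ) (f g : ℕ → ℕ → R) :
    alternatingBinomSum n (fun i j => f i j + g i j) =
      alternatingBinomSum n f + alternatingBinomSum n g := by
  simp only [alternatingBinomSum, mul_add, sum_add_distrib]

theorem alternatingBinomSum_const_mul (n : ℕ) (c : R) (f : ℕ → ℕ → R) :
    alternatingBinomSum n (fun i j => c * f i j) = c * alternatingBinomSum n f := by
  simp only [alternatingBinomSum, mul_sum, mul_left_comm]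

theorem alternatingBinomSum_pow_mul (n : ℕ) (c : R) (r : ℕ → R) :
    alternatingBinomSum n (fun i j => c ^ i * r i * (c ^ j * r j)) =
      c ^ n * alternatingBinomSum n fun i j => r i * r j := by
  rw [← alternatingBinomSum_const_mul]
  refine alternatingBinomSum_congr fun i j hij => ?_
  rw [← hij, pow_add, mul_mul_mul_comm]

theorem alternatingBinomSum_swap (n : ℕ) (f : ℕ → ℕ → R) :
    alternatingBinomSum n (fun i j => f j i) = (-1) ^ n * alternatingBinomSum n f := by
  unfold alternatingBinomSum
  rw [← Nat.sum_antidiagonal_swap, mul_sum]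
  refine sum_congr rfl fun ⟨i, j⟩ hp => ?_
  obtain rfl : i + j = n := mem_antidiagonal.mp hp
  have hsign : (-1 : R) ^ i * (-1) ^ i = 1 := by rw [← mul_pow]; simp
  simp only [Prod.fst_swap, Prod.snd_swap, ← Nat.choose_symm_add, pow_add]
  linear_combination -((-1) ^ j * ((i + j).choose i : R) * f i j) * hsign

theorem alternatingBinomSum_fst_mul (n : ℕ) (f : ℕ → ℕ → R) :
    alternatingBinomSum (n + 1) (fun i j => i * f i j) =
      -((n + 1) * alternatingBinomSum n fun i j => f (i + 1) j) := by
  unfold alternatingBinomSum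
  rw [Nat.sum_antidiagonal_succ, mul_sum, ← sum_neg_distrib]
  simp only [Nat.cast_zero, zero_mul, mul_zero, zero_add]
  refine sum_congr rfl fun p _ => ?_
  have habsorb : ((n : R) + 1) * n.choose p.1 = (n + 1).choose (p.1 + 1) * (p.1 + 1) := by
    exact_mod_cast congrArg (Nat.cast (R := R)) (Nat.add_one_mul_choose_eq n p.1)
  push_cast
  linear_combination (-1) ^ p.1 * f (p.1 + 1) p.2 * habsorb

theorem alternatingBinomSum_snd_mul (n : ℕ) (f : ℕ → ℕ → R) :
    alternatingBinomSum (n + 1) (fun i j => j * f i j) =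
      (n + 1) * alternatingBinomSum n fun i j => f i (j + 1) := by
  have hsign : (-1 : R) ^ n * (-1) ^ n = 1 := by rw [← mul_pow]; simp
  rw [alternatingBinomSum_swap (n + 1) fun i j => i * f j i, alternatingBinomSum_fst_mul,
    alternatingBinomSum_swap n fun i j => f i (j + 1), pow_succ]
  linear_combination ((n + 1) * alternatingBinomSum n fun i j => f i (j + 1)) * hsign

theorem alternatingBinomSum_fst_mul_snd_mul (n : ℕ) (f : ℕ → ℕ → R) :
    alternatingBinomSum (n + 2) (fun i j => i * (j * f i j)) =
      -((n + 2) * (n + 1) * alternatingBinomSum n fun i j => f (i + 1) (j + 1)) := by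
  rw [alternatingBinomSum_fst_mul, alternatingBinomSum_snd_mul n fun i j => f (i + 1) j]
  push_cast
  ring

theorem alternatingBinomSum_mul_self_of_odd [NoZeroDivisors R] [CharZero R] {n : ℕ} (hn : Odd n)
    (r : ℕ → R) : alternatingBinomSum n (fun i j => r i * r j) = 0 := by
  have hanti := alternatingBinomSum_swap n fun i j => r i * r j
  rw [hn.neg_one_pow, neg_one_mul] at hanti
  refine self_eq_neg.mp (Eq.trans ?_ hanti)
  exact alternatingBinomSum_congr fun i j _ => mul_comm _ _

end AlternatingBinomSum

section Dixon

theorem ascPochhammer_succ_eval_left {R : Type*} [CommSemiring R] (n : ℕ) (x : R) :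
    (ascPochhammer R (n + 1)).eval x = x * (ascPochhammer R n).eval (x + 1) := by
  simp [ascPochhammer_succ_left]

variable {R : Type*} [CommRing R] {b d : R} {r : ℕ → R}

theorem alternatingBinomSum_weighted_eq_zero (h : ∀ k : ℕ, (d + k) * r (k + 1) = (b + k) * r k)
    (n : ℕ) :
    alternatingBinomSum (n + 1)
      (fun i j => i * ((d + i - 1) * (b + j) * (r i * r j)) +
        j * ((b + i) * (d + j - 1) * (r i * r j))) = 0 := by
  rw [alternatingBinomSum_add, alternatingBinomSum_fst_mul, alternatingBinomSum_snd_mul,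
    neg_add_eq_zero]
  congr 1
  refine alternatingBinomSum_congr fun i j _ => ?_
  push_cast
  linear_combination (b + j) * r j * h i - (b + i) * r i * h j

theorem alternatingBinomSum_mul_self_add_two [NoZeroDivisors R] [CharZero R]
    (h : ∀ k : ℕ, (d + k) * r (k + 1) = (b + k) * r k) (n : ℕ) :
    b * (d + n + 1) * alternatingBinomSum (n + 2) (fun i j => r i * r j) =
      (n + 1) * (2 * (d - b) + n) *
        alternatingBinomSum n (fun i j => r (i + 1) * r (j + 1)) := by
  have hweight : alternatingBinomSum (n + 2) (fun i j =>
      b * (n + 2) * (d + n + 1) * (r i * r j) +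
        (2 * (d - b) + n) * (i * (j * (r i * r j)))) = 0 := by
    rw [← alternatingBinomSum_weighted_eq_zero h (n + 1)]
    refine alternatingBinomSum_congr fun i j hij => ?_
    have hij' : (n : R) = i + j - 2 := by
      rw [eq_sub_iff_add_eq]
      exact_mod_cast hij.symm
    rw [hij']
    ring
  rw [alternatingBinomSum_add, alternatingBinomSum_const_mul, alternatingBinomSum_const_mul,
    alternatingBinomSum_fst_mul_snd_mul] at hweight
  have hn : (n : R) + 2 ≠ 0 := by exact_mod_cast (n + 1).succ_ne_zero
  refine mul_left_cancel₀ hn ?_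
  linear_combination hweight

/-- Dixon's summation of the terminating well-poised `₃F₂`, cleared of denominators: when
`r 0 = 1`, `r k` is the quotient of Pochhammer symbols `(b)_k / (d)_k`. -/
theorem dixon_alternatingBinomSum [NoZeroDivisors R] [CharZero R] (hd : ∀ k : ℕ, d + k ≠ 0)
    (h : ∀ k : ℕ, (d + k) * r (k + 1) = (b + k) * r k) (m : ℕ) :
    (m ! : R) * (ascPochhammer R (2 * m)).eval b *
        alternatingBinomSum (2 * m) (fun i j => r i * r j) =
      (2 * m)! * (ascPochhammer R m).eval (d - b) * (r m * r (2 * m)) := by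
  induction m generalizing b d r with
  | zero => simp [alternatingBinomSum]
  | succ m ih =>
    have hshift := ih (b := b + 1) (d := d + 1) (r := fun k => r (k + 1))
      (fun k => by simpa [add_assoc, add_comm, add_left_comm] using hd (k + 1))
      (fun k => by simpa [add_assoc, add_comm, add_left_comm] using h (k + 1))
    rw [add_sub_add_right_eq_sub] at hshift
    have hrec := alternatingBinomSum_mul_self_add_two h (2 * m)
    have hlast := h (2 * m + 1)
    have hcancel := hd (2 * m + 1)
    rw [mul_add_one, ascPochhammer_succ_eval, ascPochhammer_succ_eval_left,
      ascPochhammer_succ_eval m, Nat.factorial_succ, Nat.factorial_succ (2 * m + 1),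
      Nat.factorial_succ (2 * m)]
    refine mul_left_cancel₀ hcancel ?_
    push_cast at hrec hlast hshift ⊢
    linear_combination (m + 1) * (m ! : R) * (ascPochhammer R (2 * m)).eval (b + 1) *
        (b + (2 * m + 1)) * hrec
      + 2 * (m + 1) * (2 * m + 1) * (b + (2 * m + 1)) * (d - b + m) * hshift
      - 2 * (m + 1) * (2 * m + 1) * (2 * m)! * (ascPochhammer R m).eval (d - b) * (d - b + m) *
        r (m + 1) * hlast

end Dixon

section CentralBinom

theorem cast_succ_mul_centralBinom_succ {R : Type*} [CommSemiring R] (m : ℕ) :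
    ((m : R) + 1) * (m + 1).centralBinom = 2 * (2 * m + 1) * m.centralBinom := by
  exact_mod_cast congrArg (Nat.cast (R := R)) (Nat.succ_mul_centralBinom_succ m)

theorem ascPochhammer_eval_natCast_add_one {R : Type*} [Semiring R] (l n : ℕ) :
    (ascPochhammer R n).eval ((l : R) + 1) = n ! * (l + n).choose n := by
  rw [← Nat.cast_add_one, ← Nat.cast_ascFactorial, Nat.ascFactorial_eq_factorial_mul_choose,
    Nat.cast_mul]

variable {K : Type*} [Field K] [CharZero K]

theorem ascPochhammer_eval_neg_one_div_two (m : ℕ) :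
    (1 - 2 * (m : K)) * 4 ^ m * (ascPochhammer K m).eval (-1 / 2) = m ! * m.centralBinom := by
  induction m with
  | zero => simp
  | succ m ih =>
    rw [ascPochhammer_succ_eval, Nat.factorial_succ]
    push_cast
    linear_combination 2 * (2 * (m : K) + 1) * ih
      - (m ! : K) * cast_succ_mul_centralBinom_succ (R := K) m

theorem four_pow_mul_inv_centralBinom_succ (l k : ℕ) :
    ((l : K) + 1 / 2 + k) * (4 ^ (k + 1) * ((l + (k + 1)).centralBinom : K)⁻¹) =
      (l + 1 + k) * (4 ^ k * ((l + k).centralBinom : K)⁻¹) := by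
  have hnext : ((l + (k + 1)).centralBinom : K) ≠ 0 := mod_cast Nat.centralBinom_ne_zero _
  have hcurr : ((l + k).centralBinom : K) ≠ 0 := mod_cast Nat.centralBinom_ne_zero _
  have hrec := cast_succ_mul_centralBinom_succ (R := K) (l + k)
  rw [add_assoc l k 1] at hrec
  field_simp
  push_cast at hrec
  linear_combination (-2 : K) * 4 ^ k * hrec

theorem alternatingBinomSum_inv_centralBinom (l m : ℕ) :
    (1 - 2 * (m : K)) * alternatingBinomSum (2 * m)
        (fun i j => ((l + i).centralBinom : K)⁻¹ * ((l + j).centralBinom : K)⁻¹) =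
      m.centralBinom / ((l + 2 * m).choose (2 * m) * (l + 2 * m).centralBinom *
        (l + m).centralBinom) := by
  have hd (k : ℕ) : (l : K) + 1 / 2 + k ≠ 0 := by
    intro h0
    have : ((2 * (l + k) + 1 : ℕ) : K) = 0 := by push_cast; linear_combination 2 * h0
    exact Nat.succ_ne_zero _ (Nat.cast_eq_zero.mp this)
  have hdixon := dixon_alternatingBinomSum (r := fun k => 4 ^ k * ((l + k).centralBinom : K)⁻¹) hd
    (four_pow_mul_inv_centralBinom_succ l) m
  have hdiff : (l : K) + 1 / 2 - (l + 1) = -1 / 2 := by ring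
  rw [alternatingBinomSum_pow_mul, hdiff, ascPochhammer_eval_natCast_add_one] at hdixon
  have hhalf := ascPochhammer_eval_neg_one_div_two (K := K) m
  have hm : (m ! : K) ≠ 0 := mod_cast m.factorial_ne_zero
  have h2m : ((2 * m)! : K) ≠ 0 := mod_cast (2 * m).factorial_ne_zero
  have hchoose : ((l + 2 * m).choose (2 * m) : K) ≠ 0 :=
    mod_cast (Nat.choose_pos (Nat.le_add_left _ _)).ne'
  have h4 : (4 : K) ^ (2 * m) ≠ 0 := pow_ne_zero _ (by norm_num)
  rw [div_eq_mul_inv, mul_inv, mul_inv]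
  refine mul_left_cancel₀ (mul_ne_zero (mul_ne_zero hm h2m) (mul_ne_zero hchoose h4)) ?_
  linear_combination (1 - 2 * (m : K)) * hdixon
    + (2 * m)! * 4 ^ (2 * m) * ((l + m).centralBinom : K)⁻¹ *
      ((l + 2 * m).centralBinom : K)⁻¹ * hhalf
    - m ! * (2 * m)! * 4 ^ (2 * m) * m.centralBinom * ((l + m).centralBinom : K)⁻¹ *
      ((l + 2 * m).centralBinom : K)⁻¹ * mul_inv_cancel₀ hchoose

end CentralBinom

/-- Corollary 10: reciprocal formula of Theorem C. -/
theorem stmt_14 (n lam : ℕ) :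
    ∑ k ∈ Finset.range (n + 1),
        (-1 : ℚ) ^ k * (n.choose k : ℚ) *
          ((1 - (n : ℚ)) * ((2 * lam).choose lam : ℚ) ^ 2) /
          (((2 * k + 2 * lam).choose (k + lam) : ℚ)
            * ((2 * n - 2 * k + 2 * lam).choose (n - k + lam) : ℚ))
      = (if Even n then 1 else 0) * ((2 * lam).choose lam : ℚ) ^ 2 * (n.choose (n / 2) : ℚ) /
          (((lam + n).choose n : ℚ) * ((2 * lam + 2 * n).choose (lam + n) : ℚ)
            * ((2 * lam + n).choose (lam + n / 2) : ℚ)) := by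
  calc
    _ = ((2 * lam).choose lam : ℚ) ^ 2 * ((1 - n) * alternatingBinomSum n
        fun i j => ((lam + i).centralBinom : ℚ)⁻¹ * ((lam + j).centralBinom : ℚ)⁻¹) := by
      rw [alternatingBinomSum, Nat.sum_antidiagonal_eq_sum_range_succ_mk, mul_sum, mul_sum]
      refine sum_congr rfl fun k _ => ?_
      rw [← Nat.mul_sub, ← mul_add, ← mul_add, add_comm k, add_comm (n - k)]
      simp only [Nat.centralBinom]
      ring
    _ = _ := by
      obtain ⟨m, rfl | rfl⟩ := n.even_or_odd'
      · rw [Nat.cast_mul, Nat.cast_ofNat, alternatingBinomSum_inv_centralBinom,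
          if_pos (even_two_mul m), Nat.mul_div_cancel_left m two_pos, ← mul_add, ← mul_add]
        simp only [Nat.centralBinom]
        ring
      · rw [alternatingBinomSum_mul_self_of_odd (odd_two_mul_add_one m)
            fun k => ((lam + k).centralBinom : ℚ)⁻¹,
          if_neg (Nat.not_even_two_mul_add_one m)]
        simp
end

section
/- For all natural numbers n and λ, the double integral ∫₀¹∫₀¹ (xy)^{λ−1/2} (x−y)^n √((1−x)(1−y)) dx dy equals (π² · λ! · χ(n even) / (4^{1+n+2λ} · (2+n)_λ)) · binom(2λ, λ) · binom(n, ⌊n/2⌋) · C_{λ+⌊n/2⌋}. -/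
/-- Real Pochhammer symbol: `(x)_0 = 1`, `(x)_n = x(x+1)⋯(x+n-1)`. -/
def poch (x : ℝ) (n : ℕ) : ℝ := ∏ i ∈ Finset.range n, (x + i)

/-!
For independent Beta(`a`, `b`) variables `X`, `Y`, the integral is a multiple of `𝔼[(X - Y) ^ n]`,
which vanishes for odd `n` by symmetry. For `n = 2 m` write `⟨f⟩` for `𝔼[(X - Y) ^ (2 m) f(X, Y)]`.
Following Aomoto, integrate `∂/∂x (x (1 - x) q(x, y) (x - y) ^ (2 m))` against the density: the
derivative of `(x - y) ^ (2 m)` contributes an odd power of `x - y`, which the exchange of `x` and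
`y` turns back into an even one. Taking `q = 1, y, x` gives linear relations between `⟨1⟩`, `⟨x⟩`,
`⟨x y⟩` and `⟨x ^ 2⟩`, hence the ratio of `⟨(x - y) ^ 2⟩` to `⟨1⟩`, and induction on `m` yields
Selberg's product of Gamma values.
-/

open MeasureTheory ProbabilityTheory Set

section BetaMeasure

variable {a b : ℝ}

theorem measurable_betaPDF (a b : ℝ) : Measurable (betaPDF a b) :=
  (measurable_betaPDFReal a b).ennreal_ofReal

theorem ae_mem_Icc_betaMeasure (a b : ℝ) : ∀ᵐ x ∂betaMeasure a b, x ∈ Icc (0 : ℝ) 1 := by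
  rw [betaMeasure, ae_withDensity_iff (measurable_betaPDF a b)]
  refine .of_forall fun x hx ↦ ⟨?_, ?_⟩
  · exact (not_le.1 fun h ↦ hx (betaPDF_eq_zero_of_nonpos h)).le
  · exact (not_le.1 fun h ↦ hx (betaPDF_eq_zero_of_one_le h)).le

theorem toReal_betaPDF (ha : 0 < a) (hb : 0 < b) (x : ℝ) :
    (betaPDF a b x).toReal =
      (Ioo 0 1).indicator (fun t ↦ (beta a b)⁻¹ * (t ^ (a - 1) * (1 - t) ^ (b - 1))) x := by
  by_cases hx : 0 < x ∧ x < 1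
  · rw [betaPDF, ENNReal.toReal_ofReal (betaPDFReal_pos hx.1 hx.2 ha hb).le, betaPDFReal,
      if_pos hx, indicator_of_mem (mem_Ioo.2 hx), one_div, mul_assoc]
  · rw [betaPDF_eq, if_neg hx, indicator_of_notMem (mem_Ioo.not.2 hx), ENNReal.ofReal_zero,
      ENNReal.toReal_zero]

theorem toReal_betaPDF_smul (ha : 0 < a) (hb : 0 < b) (f : ℝ → ℝ) :
    (fun x ↦ (betaPDF a b x).toReal • f x) = (Ioo 0 1).indicator
      fun x ↦ (beta a b)⁻¹ * (x ^ (a - 1) * (1 - x) ^ (b - 1) * f x) := by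
  ext x
  rw [toReal_betaPDF ha hb, smul_eq_mul, ← indicator_mul_left]
  simp only [mul_assoc]

theorem integral_betaMeasure (ha : 0 < a) (hb : 0 < b) (f : ℝ → ℝ) :
    ∫ x, f x ∂betaMeasure a b =
      (beta a b)⁻¹ * ∫ x in (0 : ℝ)..1, x ^ (a - 1) * (1 - x) ^ (b - 1) * f x := by
  rw [betaMeasure, integral_withDensity_eq_integral_toReal_smul
      (measurable_betaPDF a b) (.of_forall fun _ ↦ ENNReal.ofReal_lt_top),
    toReal_betaPDF_smul ha hb, integral_indicator measurableSet_Ioo, integral_const_mul,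
    ← integral_Ioc_eq_integral_Ioo, intervalIntegral.integral_of_le zero_le_one]

theorem intervalIntegrable_of_integrable_betaMeasure (ha : 0 < a) (hb : 0 < b) {f : ℝ → ℝ}
    (hf : Integrable f (betaMeasure a b)) :
    IntervalIntegrable (fun x ↦ x ^ (a - 1) * (1 - x) ^ (b - 1) * f x) volume 0 1 := by
  rw [betaMeasure, integrable_withDensity_iff_integrable_smul'
      (measurable_betaPDF a b) (.of_forall fun _ ↦ ENNReal.ofReal_lt_top),
    toReal_betaPDF_smul ha hb, integrable_indicator_iff measurableSet_Ioo] at hf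
  rw [intervalIntegrable_iff_integrableOn_Ioo_of_le zero_le_one]
  exact (integrable_const_mul_iff (beta_pos ha hb).ne'.isUnit.inv _).1 hf

theorem integrable_betaMeasure_of_continuous (ha : 0 < a) (hb : 0 < b) {f : ℝ → ℝ}
    (hf : Continuous f) : Integrable f (betaMeasure a b) := by
  have := isProbabilityMeasureBeta ha hb
  rw [← Measure.restrict_eq_self_of_ae_mem (ae_mem_Icc_betaMeasure a b)]
  exact hf.continuousOn.integrableOn_compact isCompact_Icc

theorem integrable_prod_betaMeasure_of_continuous (ha : 0 < a) (hb : 0 < b) {f : ℝ × ℝ → ℝ}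
    (hf : Continuous f) : Integrable f ((betaMeasure a b).prod (betaMeasure a b)) := by
  have := isProbabilityMeasureBeta ha hb
  rw [← Measure.restrict_eq_self_of_ae_mem (ae_mem_Icc_betaMeasure a b), Measure.prod_restrict]
  exact hf.continuousOn.integrableOn_compact (isCompact_Icc.prod isCompact_Icc)

theorem integral_betaMeasure_stein (ha : 0 < a) (hb : 0 < b) {f f' : ℝ → ℝ}
    (hf : ∀ x, HasDerivAt f (f' x) x) (hf' : Continuous f') :
    ∫ x, (x * (1 - x) * f' x + (a - (a + b) * x) * f x) ∂betaMeasure a b = 0 := by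
  have hf_cont : Continuous f := continuous_iff_continuousAt.2 fun x ↦ (hf x).continuousAt
  have hderiv : ∀ x ∈ Ioo (0 : ℝ) 1, HasDerivAt (fun x ↦ x ^ a * (1 - x) ^ b * f x)
      (x ^ (a - 1) * (1 - x) ^ (b - 1) *
        (x * (1 - x) * f' x + (a - (a + b) * x) * f x)) x := by
    intro x hx
    have hx₀ : x ≠ 0 := hx.1.ne'
    have hx₁ : 1 - x ≠ 0 := (sub_pos.2 hx.2).ne'
    refine ((((hasDerivAt_id' x).rpow_const (.inl hx₀)).fun_mul
      (((hasDerivAt_id' x).const_sub 1).rpow_const (.inl hx₁))).fun_mul (hf x)).congr_deriv ?_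
    rw [Real.rpow_sub_one hx₀, Real.rpow_sub_one hx₁]
    field_simp
    ring
  have hcont : Continuous fun x ↦ x ^ a * (1 - x) ^ b * f x :=
    ((Real.continuous_rpow_const ha.le).mul ((Real.continuous_rpow_const hb.le).comp
      (continuous_sub_left 1))).mul hf_cont
  rw [integral_betaMeasure ha hb, intervalIntegral.integral_eq_sub_of_hasDerivAt_of_le zero_le_one
    hcont.continuousOn hderiv (intervalIntegrable_of_integrable_betaMeasure ha hb
      (integrable_betaMeasure_of_continuous ha hb (by fun_prop)))]
  simp [ha.ne', hb.ne']

theorem intervalIntegral_prod_eq_integral_betaMeasure (ha : 0 < a) (hb : 0 < b)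
    {f : ℝ × ℝ → ℝ} (hf : Continuous f) :
    ∫ x in (0 : ℝ)..1, ∫ y in (0 : ℝ)..1,
        (x * y) ^ (a - 1) * f (x, y) * ((1 - x) * (1 - y)) ^ (b - 1) =
      beta a b ^ 2 * ∫ z, f z ∂(betaMeasure a b).prod (betaMeasure a b) := by
  have := isProbabilityMeasureBeta ha hb
  have hβ : beta a b ≠ 0 := (beta_pos ha hb).ne'
  have hsplit : ∀ x ∈ uIcc (0 : ℝ) 1, ∫ y in (0 : ℝ)..1,
        (x * y) ^ (a - 1) * f (x, y) * ((1 - x) * (1 - y)) ^ (b - 1) =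
      beta a b * (x ^ (a - 1) * (1 - x) ^ (b - 1) * ∫ y, f (x, y) ∂betaMeasure a b) := by
    intro x hx
    rw [uIcc_of_le zero_le_one] at hx
    rw [integral_betaMeasure ha hb, mul_left_comm, mul_inv_cancel_left₀ hβ,
      ← intervalIntegral.integral_const_mul]
    refine intervalIntegral.integral_congr fun y hy ↦ ?_
    rw [uIcc_of_le zero_le_one] at hy
    simp only [Real.mul_rpow hx.1 hy.1, Real.mul_rpow (sub_nonneg.2 hx.2) (sub_nonneg.2 hy.2)]
    ring
  rw [intervalIntegral.integral_congr hsplit, intervalIntegral.integral_const_mul,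
    integral_prod _ (integrable_prod_betaMeasure_of_continuous ha hb hf),
    integral_betaMeasure ha hb, sq, mul_assoc, mul_inv_cancel_left₀ hβ]

end BetaMeasure

section Swap

theorem integral_prod_eq_half_integral_add_swap {α : Type*} [MeasurableSpace α] {μ : Measure α}
    [SFinite μ] {f : α × α → ℝ} (hf : Integrable f (μ.prod μ)) :
    ∫ z, f z ∂μ.prod μ = 2⁻¹ * ∫ z, (f z + f z.swap) ∂μ.prod μ := by
  have hadd : ∫ z, (f z + f z.swap) ∂μ.prod μ = ∫ z, f z ∂μ.prod μ + ∫ z, f z.swap ∂μ.prod μ :=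
    integral_add hf hf.swap
  rw [hadd, integral_prod_swap]
  ring

theorem integral_prod_sub_pow_of_odd {μ : Measure ℝ} [SFinite μ] {n : ℕ} (hn : Odd n) :
    ∫ z, (z.1 - z.2) ^ n ∂μ.prod μ = 0 := by
  have hneg : ∀ z : ℝ × ℝ, (z.swap.1 - z.swap.2) ^ n = -(z.1 - z.2) ^ n := fun z ↦ by
    rw [Prod.fst_swap, Prod.snd_swap, ← neg_sub, hn.neg_pow]
  have h := integral_prod_swap (μ := μ) (ν := μ) fun z : ℝ × ℝ ↦ (z.1 - z.2) ^ n
  simp only [hneg, integral_neg] at h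
  linarith

end Swap

section Gamma

theorem Gamma_add_natCast_succ {x : ℝ} (hx : 0 < x) (n : ℕ) :
    Real.Gamma (x + (n + 1 : ℕ)) = (x + n) * Real.Gamma (x + n) := by
  rw [Nat.cast_succ, ← add_assoc, Real.Gamma_add_one (by positivity)]

theorem Gamma_mul_poch {x : ℝ} (hx : 0 < x) (n : ℕ) :
    Real.Gamma x * poch x n = Real.Gamma (x + n) := by
  induction n with
  | zero => simp [poch]
  | succ n ih =>
    rw [Gamma_add_natCast_succ hx, ← ih, poch, poch, Finset.prod_range_succ]
    ring

theorem Gamma_natCast_add_half (k : ℕ) :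
    Real.Gamma (k + 1 / 2) = √Real.pi * (k.factorial * k.centralBinom) / 4 ^ k := by
  induction k with
  | zero => simpa using Real.Gamma_one_half_eq
  | succ k ih =>
    have hbinom : ((k + 1) * (k + 1).centralBinom : ℝ) = 2 * (2 * k + 1) * k.centralBinom := by
      exact_mod_cast Nat.succ_mul_centralBinom_succ k
    rw [add_comm, Gamma_add_natCast_succ one_half_pos, add_comm, ih, Nat.factorial_succ]
    push_cast
    linear_combination -√Real.pi * k.factorial / 4 ^ (k + 1) * hbinom

theorem Gamma_natCast_add_two (k : ℕ) : Real.Gamma (k + 2) = (k + 1) * k.factorial := by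
  rw [show (k + 2 : ℝ) = (k + 1 : ℕ) + 1 by push_cast; ring, Real.Gamma_nat_eq_factorial,
    Nat.factorial_succ, Nat.cast_mul, Nat.cast_succ]

theorem Gamma_natCast_add_half_div (k : ℕ) :
    Real.Gamma (k + 1 / 2) / Real.Gamma (k + 2) = √Real.pi * catalan k / 4 ^ k := by
  have hcatalan : ((k + 1) * catalan k : ℝ) = k.centralBinom := by
    exact_mod_cast succ_mul_catalan_eq_centralBinom k
  rw [Gamma_natCast_add_half, Gamma_natCast_add_two, ← hcatalan]
  field_simp

theorem Gamma_three_halves_add_natCast (m : ℕ) :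
    Real.Gamma (3 / 2 + m) * (2 * m).factorial / (Real.Gamma (2 + (2 * m : ℕ)) * m.factorial) =
      √Real.pi * m.centralBinom / (2 * 4 ^ m) := by
  have hnum : Real.Gamma (3 / 2 + m) = (m + 1 / 2) * Real.Gamma (m + 1 / 2) := by
    rw [← Real.Gamma_add_one (by positivity)]
    ring_nf
  rw [hnum, add_comm 2, Gamma_natCast_add_two, Gamma_natCast_add_half]
  push_cast
  field_simp

theorem selberg_Gamma_quotient_natCast_add_half (l m : ℕ) :
    Real.Gamma (l + 1 / 2) * Real.Gamma (3 / 2) * Real.Gamma (l + 1 / 2 + m) *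
        Real.Gamma (3 / 2 + m) * (2 * m).factorial /
      (Real.Gamma (l + 1 / 2 + 3 / 2 + m) * Real.Gamma (l + 1 / 2 + 3 / 2 + (2 * m : ℕ)) *
        m.factorial) =
    Real.pi ^ 2 * l.factorial / (4 ^ (1 + 2 * m + 2 * l) * poch (2 + (2 * m : ℕ)) l) *
      l.centralBinom * m.centralBinom * catalan (l + m) := by
  have hΓ : Real.Gamma (3 / 2) = √Real.pi / 2 := by
    simpa using Gamma_three_halves_add_natCast 0
  have hpoch : Real.Gamma (l + 1 / 2 + 3 / 2 + (2 * m : ℕ)) =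
      Real.Gamma (2 + (2 * m : ℕ)) * poch (2 + (2 * m : ℕ)) l := by
    rw [Gamma_mul_poch (by positivity)]
    ring_nf
  have hcatalan := Gamma_natCast_add_half_div (l + m)
  push_cast at hcatalan
  have hpi : √Real.pi ^ 2 = Real.pi := Real.sq_sqrt Real.pi_pos.le
  calc
    _ = Real.Gamma (l + 1 / 2) * Real.Gamma (3 / 2) / poch (2 + (2 * m : ℕ)) l *
        (Real.Gamma (l + m + 1 / 2) / Real.Gamma (l + m + 2)) *
        (Real.Gamma (3 / 2 + m) * (2 * m).factorial /
          (Real.Gamma (2 + (2 * m : ℕ)) * m.factorial)) := by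
      rw [hpoch, show (l + 1 / 2 + m : ℝ) = l + m + 1 / 2 by ring,
        show (l + 1 / 2 + 3 / 2 + m : ℝ) = l + m + 2 by ring]
      ring
    _ = (√Real.pi ^ 2) ^ 2 * l.factorial / (4 ^ (1 + 2 * m + 2 * l) * poch (2 + (2 * m : ℕ)) l) *
        l.centralBinom * m.centralBinom * catalan (l + m) := by
      rw [Gamma_natCast_add_half, hΓ, hcatalan, Gamma_three_halves_add_natCast]
      ring
    _ = _ := by rw [hpi]

end Gamma

section Aomoto

variable {a b : ℝ}

/-- The functional `f ↦ 𝔼[(X - Y) ^ (2 * m) * f (X, Y)]` for independent Beta(`a`, `b`) variables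
`X`, `Y`, that is, integration against the normalised Selberg density. The positivity proofs are
arguments because additivity rests on integrability. -/
noncomputable def selbergFunctional (ha : 0 < a) (hb : 0 < b) (m : ℕ) : C(ℝ × ℝ, ℝ) →ₗ[ℝ] ℝ where
  toFun f := ∫ z, (z.1 - z.2) ^ (2 * m) * f z ∂(betaMeasure a b).prod (betaMeasure a b)
  map_add' f g := by
    simp only [ContinuousMap.add_apply, mul_add]
    exact integral_add (integrable_prod_betaMeasure_of_continuous ha hb (by fun_prop))
      (integrable_prod_betaMeasure_of_continuous ha hb (by fun_prop))
  map_smul' c f := by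
    simp only [ContinuousMap.smul_apply, smul_eq_mul, mul_left_comm _ c, integral_const_mul,
      RingHom.id_apply]

theorem selbergFunctional_apply (ha : 0 < a) (hb : 0 < b) (m : ℕ) (f : C(ℝ × ℝ, ℝ)) :
    selbergFunctional ha hb m f =
      ∫ z, (z.1 - z.2) ^ (2 * m) * f z ∂(betaMeasure a b).prod (betaMeasure a b) :=
  rfl

theorem selbergFunctional_prodSwap (ha : 0 < a) (hb : 0 < b) (m : ℕ) (f : C(ℝ × ℝ, ℝ)) :
    selbergFunctional ha hb m (f.comp ContinuousMap.prodSwap) = selbergFunctional ha hb m f := by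
  have := isProbabilityMeasureBeta ha hb
  rw [selbergFunctional_apply, selbergFunctional_apply, ← integral_prod_swap]
  refine integral_congr_ae (.of_forall fun z ↦ ?_)
  have hsymm : (z.2 - z.1) ^ (2 * m) = (z.1 - z.2) ^ (2 * m) := by
    rw [← neg_sub, (even_two_mul m).neg_pow]
  simp [hsymm]

theorem selbergFunctional_snd (ha : 0 < a) (hb : 0 < b) (m : ℕ) :
    selbergFunctional ha hb m .snd = selbergFunctional ha hb m .fst :=
  selbergFunctional_prodSwap ha hb m .fst

theorem selbergFunctional_snd_sq (ha : 0 < a) (hb : 0 < b) (m : ℕ) :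
    selbergFunctional ha hb m (.snd ^ 2) = selbergFunctional ha hb m (.fst ^ 2) := by
  rw [← selbergFunctional_prodSwap]
  rfl

theorem selbergFunctional_succ_apply_one (ha : 0 < a) (hb : 0 < b) (m : ℕ) :
    selbergFunctional ha hb (m + 1) 1 =
      selbergFunctional ha hb m ((ContinuousMap.fst - ContinuousMap.snd) ^ 2) := by
  simp [selbergFunctional_apply, mul_add, pow_add]

theorem integral_odd_pow_mul_eq_selbergFunctional (ha : 0 < a) (hb : 0 < b) (m : ℕ)
    {g s : C(ℝ × ℝ, ℝ)} (hs : ∀ x y, g (x, y) - g (y, x) = (x - y) * s (x, y)) :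
    ∫ z, 2 * m * (z.1 - z.2) ^ (2 * m - 1) * g z ∂(betaMeasure a b).prod (betaMeasure a b) =
      m * selbergFunctional ha hb m s := by
  have := isProbabilityMeasureBeta ha hb
  rw [integral_prod_eq_half_integral_add_swap
    (integrable_prod_betaMeasure_of_continuous ha hb (by fun_prop)), selbergFunctional_apply,
    ← integral_const_mul, ← integral_const_mul]
  refine integral_congr_ae (.of_forall fun ⟨x, y⟩ ↦ ?_)
  rcases m with _ | m
  · simp
  · have hodd : (y - x) ^ (2 * m + 1) = -(x - y) ^ (2 * m + 1) := by
      rw [← neg_sub, (odd_two_mul_add_one m).neg_pow]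
    rw [show 2 * (m + 1) - 1 = 2 * m + 1 by omega, show 2 * (m + 1) = 2 * m + 1 + 1 by omega]
    simp only [Prod.swap_prod_mk, hodd]
    linear_combination ((m + 1 : ℕ) : ℝ) * (x - y) ^ (2 * m + 1) * hs x y

theorem selbergFunctional_aomoto (ha : 0 < a) (hb : 0 < b) (m : ℕ) {q q' s : C(ℝ × ℝ, ℝ)}
    (hq : ∀ x y, HasDerivAt (fun t ↦ q (t, y)) (q' (x, y)) x)
    (hs : ∀ x y, x * (1 - x) * q (x, y) - y * (1 - y) * q (y, x) = (x - y) * s (x, y)) :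
    selbergFunctional ha hb m (.fst * (1 - .fst) * q' + (a • 1 - (a + b) • .fst) * q +
      (m : ℝ) • s) = 0 := by
  have := isProbabilityMeasureBeta ha hb
  have hstein : ∫ z, ((z.1 - z.2) ^ (2 * m) *
        (.fst * (1 - .fst) * q' + (a • 1 - (a + b) • .fst) * q : C(ℝ × ℝ, ℝ)) z +
      2 * m * (z.1 - z.2) ^ (2 * m - 1) * (.fst * (1 - .fst) * q : C(ℝ × ℝ, ℝ)) z)
        ∂(betaMeasure a b).prod (betaMeasure a b) = 0 := by
    rw [integral_prod_symm _ (integrable_prod_betaMeasure_of_continuous ha hb (by fun_prop))]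
    refine integral_eq_zero_of_ae (.of_forall fun y ↦ ?_)
    simp only [Pi.zero_apply]
    rw [← integral_betaMeasure_stein ha hb (f := fun x ↦ (x - y) ^ (2 * m) * q (x, y))
      (fun x ↦ (((hasDerivAt_id x).sub_const y).pow (2 * m)).mul (hq x y)) (by fun_prop)]
    refine integral_congr_ae (.of_forall fun x ↦ ?_)
    simp only [ContinuousMap.add_apply, ContinuousMap.mul_apply, ContinuousMap.fst_apply,
      ContinuousMap.sub_apply, ContinuousMap.one_apply, ContinuousMap.coe_smul,
      ContinuousMap.coe_one, Pi.smul_apply, Pi.one_apply, smul_eq_mul, mul_one, Nat.cast_mul,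
      Nat.cast_ofNat, id_eq, Pi.pow_apply]
    ring
  rw [integral_add (integrable_prod_betaMeasure_of_continuous ha hb (by fun_prop))
    (integrable_prod_betaMeasure_of_continuous ha hb (by fun_prop)),
    integral_odd_pow_mul_eq_selbergFunctional ha hb m (s := s) (by simpa using hs)] at hstein
  rw [map_add, map_smul, smul_eq_mul]
  exact hstein

theorem selbergFunctional_fst (ha : 0 < a) (hb : 0 < b) (m : ℕ) :
    (a + b + 2 * m) * selbergFunctional ha hb m .fst = (a + m) * selbergFunctional ha hb m 1 := by
  have h := selbergFunctional_aomoto ha hb m (q := 1) (q' := 0) (s := 1 - .fst - .snd)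
    (fun x _ ↦ hasDerivAt_const x 1) fun x y ↦ by
      simp only [ContinuousMap.one_apply, mul_one, ContinuousMap.sub_apply, ContinuousMap.fst_apply,
        ContinuousMap.snd_apply]
      ring
  simp only [mul_zero, zero_add, mul_one, map_add, map_sub, map_smul, smul_eq_mul,
    selbergFunctional_snd] at h
  linear_combination -h

theorem selbergFunctional_fst_mul_snd (ha : 0 < a) (hb : 0 < b) (m : ℕ) :
    (a + b + m) * selbergFunctional ha hb m (.fst * .snd) = a * selbergFunctional ha hb m .fst := by
  have h := selbergFunctional_aomoto ha hb m (q := .snd) (q' := 0) (s := -(.fst * .snd))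
    (fun x y ↦ hasDerivAt_const x y) fun x y ↦ by
      simp only [ContinuousMap.snd_apply, ContinuousMap.neg_apply, ContinuousMap.mul_apply,
        ContinuousMap.fst_apply]
      ring
  simp only [mul_zero, zero_add, sub_mul, one_mul, smul_mul_assoc, map_add, map_sub, map_neg,
    map_smul, smul_eq_mul, selbergFunctional_snd] at h
  linear_combination -h

theorem selbergFunctional_fst_sq (ha : 0 < a) (hb : 0 < b) (m : ℕ) :
    (a + b + 2 * m + 1) * selbergFunctional ha hb m (.fst ^ 2) =
      (a + 2 * m + 1) * selbergFunctional ha hb m .fst -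
        m * selbergFunctional ha hb m (.fst * .snd) := by
  have h := selbergFunctional_aomoto ha hb m (q := .fst) (q' := 1)
    (s := .fst + .snd - .fst ^ 2 - .fst * .snd - .snd ^ 2)
    (fun x _ ↦ hasDerivAt_id x) fun x y ↦ by
      simp only [ContinuousMap.fst_apply, ContinuousMap.sub_apply, ContinuousMap.add_apply,
        ContinuousMap.snd_apply, ContinuousMap.pow_apply, ContinuousMap.mul_apply]
      ring
  simp only [mul_one, mul_sub, sub_mul, one_mul, smul_mul_assoc, ← sq, map_add, map_sub,
    map_smul, smul_eq_mul, selbergFunctional_snd, selbergFunctional_snd_sq] at h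
  linear_combination -h

theorem selbergFunctional_one_recurrence (ha : 0 < a) (hb : 0 < b) (m : ℕ) :
    (a + b + m) * (a + b + 2 * m) * (a + b + 2 * m + 1) * selbergFunctional ha hb (m + 1) 1 =
      2 * (2 * m + 1) * (a + m) * (b + m) * selbergFunctional ha hb m 1 := by
  have hexpand : selbergFunctional ha hb (m + 1) 1 =
      2 * (selbergFunctional ha hb m (.fst ^ 2) - selbergFunctional ha hb m (.fst * .snd)) := by
    rw [selbergFunctional_succ_apply_one, sub_sq, mul_assoc, two_mul]
    simp only [map_add, map_sub, selbergFunctional_snd_sq]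
    ring
  linear_combination (a + b + m) * (a + b + 2 * m) * (a + b + 2 * m + 1) * hexpand +
    2 * (a + b + m) * (a + b + 2 * m) * selbergFunctional_fst_sq ha hb m -
    2 * (a + b + 3 * m + 1) * (a + b + 2 * m) * selbergFunctional_fst_mul_snd ha hb m +
    2 * (2 * m + 1) * (b + m) * selbergFunctional_fst ha hb m

theorem beta_sq_mul_selbergFunctional_one (ha : 0 < a) (hb : 0 < b) (m : ℕ) :
    beta a b ^ 2 * selbergFunctional ha hb m 1 =
      Real.Gamma a * Real.Gamma b * Real.Gamma (a + m) * Real.Gamma (b + m) * (2 * m).factorial /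
        (Real.Gamma (a + b + m) * Real.Gamma (a + b + (2 * m : ℕ)) * m.factorial) := by
  induction m with
  | zero =>
    have := isProbabilityMeasureBeta ha hb
    simp only [beta, selbergFunctional_apply, mul_zero, pow_zero, ContinuousMap.one_apply, mul_one,
      integral_const, probReal_univ, smul_eq_mul, Nat.cast_zero, add_zero, Nat.factorial_zero,
      Nat.cast_one]
    ring
  | succ m ih =>
    have hrec := selbergFunctional_one_recurrence ha hb m
    have hΓ₁ : Real.Gamma (a + b + m) ≠ 0 := (Real.Gamma_pos_of_pos (by positivity)).ne'
    have hΓ₂ : Real.Gamma (a + b + (2 * m : ℕ)) ≠ 0 := (Real.Gamma_pos_of_pos (by positivity)).ne'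
    have hne : (a + b + m) * (a + b + 2 * m) * (a + b + 2 * m + 1) ≠ 0 := by positivity
    refine mul_left_cancel₀ hne ?_
    rw [mul_left_comm, hrec, mul_left_comm, ih, show 2 * (m + 1) = 2 * m + 1 + 1 by ring,
      Gamma_add_natCast_succ ha, Gamma_add_natCast_succ hb,
      Gamma_add_natCast_succ (add_pos ha hb), Gamma_add_natCast_succ (add_pos ha hb),
      Gamma_add_natCast_succ (add_pos ha hb), Nat.factorial_succ, Nat.factorial_succ,
      Nat.factorial_succ]
    push_cast at hΓ₂ ⊢
    field_simp
    ring

end Aomoto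

/-- Selberg's integral in two variables; Selberg's exponent `γ` is `n / 2`. -/
theorem stmt_16_general {a b : ℝ} (ha : 0 < a) (hb : 0 < b) (n : ℕ) :
    ∫ x in (0 : ℝ)..1, ∫ y in (0 : ℝ)..1,
        (x * y) ^ (a - 1) * (x - y) ^ n * ((1 - x) * (1 - y)) ^ (b - 1) =
      if Even n then
        Real.Gamma a * Real.Gamma b * Real.Gamma (a + (n / 2 : ℕ)) * Real.Gamma (b + (n / 2 : ℕ)) *
          n.factorial / (Real.Gamma (a + b + (n / 2 : ℕ)) * Real.Gamma (a + b + n) *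
            (n / 2).factorial)
      else 0 := by
  have := isProbabilityMeasureBeta ha hb
  rw [intervalIntegral_prod_eq_integral_betaMeasure ha hb (f := fun z ↦ (z.1 - z.2) ^ n)
    (by fun_prop)]
  split_ifs with hn
  · obtain ⟨m, rfl⟩ := hn.two_dvd
    have h := beta_sq_mul_selbergFunctional_one ha hb m
    simp only [selbergFunctional_apply, ContinuousMap.one_apply, mul_one] at h
    simpa using h
  · rw [integral_prod_sub_pow_of_odd (Nat.not_even_iff_odd.1 hn), mul_zero]

/-- Corollary 12: integral formula equivalent to Theorem A. -/
theorem stmt_16 (n lam : ℕ) :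
    ∫ x in (0 : ℝ)..1, ∫ y in (0 : ℝ)..1,
        (x * y) ^ ((lam : ℝ) - 1 / 2) * (x - y) ^ n * Real.sqrt ((1 - x) * (1 - y))
      = (Real.pi ^ 2 * (lam.factorial : ℝ) * (if Even n then 1 else 0) /
            ((4 : ℝ) ^ (1 + n + 2 * lam) * poch (2 + (n : ℝ)) lam))
          * ((2 * lam).choose lam : ℝ) * (n.choose (n / 2) : ℝ)
          * (catalan (lam + n / 2) : ℝ) := by
  have hselberg := stmt_16_general (a := lam + 1 / 2) (b := 3 / 2) (by positivity) (by norm_num) n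
  rw [show (lam + 1 / 2 - 1 : ℝ) = lam - 1 / 2 by ring, show (3 / 2 - 1 : ℝ) = 1 / 2 by norm_num]
    at hselberg
  simp only [Real.sqrt_eq_rpow, hselberg]
  split_ifs with hn
  · obtain ⟨m, rfl⟩ := hn.two_dvd
    rw [Nat.mul_div_cancel_left m two_pos, selberg_Gamma_quotient_natCast_add_half, mul_one,
      Nat.centralBinom, Nat.centralBinom]
  · simp only [mul_zero, zero_div, zero_mul]
end
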